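/- arXiv:2311.14495 — 9 statements merged into one kernel-verified Lean document; each statement's English description precedes it below -/
import Mathlib

section
/- Let f(w) = −e^w for w ∈ ℝ. Then for every w ∈ ℝ and every β ≥ 0, sup_{|w̃ − w| ≤ β} ∫₀^∞ |e^{f(w̃) t} − e^{f(w) t}| dt = (e^β − 1)/|f(w)|. Consequently sup_{w ∈ ℝ} [ |f(w)| · sup_{|w̃ − w| ≤ β} ∫₀^∞ |e^{f(w̃) t} − e^{f(w) t}| dt ] ≤ e^β − 1, so the exponential reparameterization f(w) = −e^w is a stable reparameterization with modulus g(β) = e^β − 1. -/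
open Set

theorem aux_le (x w : ℝ) (h : x ≤ w) :
    ∫ t in Ioi (0:ℝ), |Real.exp (-Real.exp x * t) - Real.exp (-Real.exp w * t)|
      = (Real.exp x)⁻¹ - (Real.exp w)⁻¹ := by
  have hx : -Real.exp x < 0 := neg_neg_of_pos (Real.exp_pos x)
  have hw : -Real.exp w < 0 := neg_neg_of_pos (Real.exp_pos w)
  have e : ∫ t in Ioi (0:ℝ), |Real.exp (-Real.exp x * t) - Real.exp (-Real.exp w * t)|
      = ∫ t in Ioi (0:ℝ), (Real.exp (-Real.exp x * t) - Real.exp (-Real.exp w * t)) := by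
    apply MeasureTheory.setIntegral_congr_fun measurableSet_Ioi
    intro t ht
    apply abs_of_nonneg
    have ht' : (0:ℝ) < t := ht
    have := Real.exp_le_exp.2 h
    rw [sub_nonneg, Real.exp_le_exp]
    nlinarith
  rw [e, MeasureTheory.integral_sub (integrableOn_exp_mul_Ioi hx 0) (integrableOn_exp_mul_Ioi hw 0),
    integral_exp_mul_Ioi hx, integral_exp_mul_Ioi hw]
  simp [neg_div_neg_eq]

theorem aux (x w : ℝ) :
    ∫ t in Ioi (0:ℝ), |Real.exp (-Real.exp x * t) - Real.exp (-Real.exp w * t)|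
      = |Real.exp (w - x) - 1| / Real.exp w := by
  have hw := Real.exp_pos w
  have hx := Real.exp_pos x
  rcases le_total x w with h | h
  · rw [aux_le x w h, abs_of_nonneg (by rw [sub_nonneg]; exact Real.one_le_exp (by linarith)),
      Real.exp_sub]
    field_simp
  · simp_rw [abs_sub_comm (Real.exp (-Real.exp x * _))]
    rw [aux_le w x h, abs_of_nonpos (by rw [sub_nonpos]; exact Real.exp_le_one_iff.2 (by linarith)),
      Real.exp_sub]
    field_simp
    ring

/-- The exponential reparameterization `f(w) = -e^w` is stable: for every `w` and `β ≥ 0`,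
`sup_{|w' − w| ≤ β} ∫₀^∞ |e^{f(w') t} − e^{f(w) t}| dt = (e^β − 1)/|f(w)|`, and consequently
`|f(w)| ⬝ sup_{|w' − w| ≤ β} ∫₀^∞ |e^{f(w') t} − e^{f(w) t}| dt ≤ e^β − 1` for all `w`,
so `g(β) = e^β − 1` is a stability modulus. -/
theorem stmt5 (β : ℝ) (hβ : 0 ≤ β) :
    (∀ w : ℝ,
      (⨆ wt : {x : ℝ // |x - w| ≤ β},
          ∫ t in Ioi (0:ℝ),
            |Real.exp (-Real.exp (wt : ℝ) * t) - Real.exp (-Real.exp w * t)|)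
        = (Real.exp β - 1) / |(-Real.exp w)|) ∧
    (∀ w : ℝ,
      |(-Real.exp w)| *
        (⨆ wt : {x : ℝ // |x - w| ≤ β},
          ∫ t in Ioi (0:ℝ),
            |Real.exp (-Real.exp (wt : ℝ) * t) - Real.exp (-Real.exp w * t)|)
        ≤ Real.exp β - 1) := by
  have key : ∀ w : ℝ,
      (⨆ wt : {x : ℝ // |x - w| ≤ β},
          ∫ t in Ioi (0:ℝ),
            |Real.exp (-Real.exp (wt : ℝ) * t) - Real.exp (-Real.exp w * t)|)
        = (Real.exp β - 1) / |(-Real.exp w)| := by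
    intro w
    simp_rw [aux, abs_neg, abs_of_pos (Real.exp_pos w)]
    have hb : ∀ wt : {x : ℝ // |x - w| ≤ β},
        |Real.exp (w - wt) - 1| / Real.exp w ≤ (Real.exp β - 1) / Real.exp w := by
      rintro ⟨x, hx⟩
      have hx' := abs_le.1 hx
      gcongr
      rw [abs_le]
      have h1 : Real.exp (-β) ≤ Real.exp (w - x) := Real.exp_le_exp.2 (by linarith)
      have h2 : Real.exp (w - x) ≤ Real.exp β := Real.exp_le_exp.2 (by linarith)
      have h3 := Real.add_one_le_exp β
      have h4 := Real.add_one_le_exp (-β)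
      constructor <;> simp only <;> linarith
    have hm : |(w - β) - w| ≤ β := by
      rw [show (w - β) - w = -β by ring, abs_neg, abs_of_nonneg hβ]
    haveI : Nonempty {x : ℝ // |x - w| ≤ β} := ⟨⟨w - β, hm⟩⟩
    apply le_antisymm (ciSup_le hb)
    refine le_trans (le_of_eq ?_) (le_ciSup (f := fun wt : {x : ℝ // |x - w| ≤ β} =>
      |Real.exp (w - wt) - 1| / Real.exp w) ⟨_, by rintro _ ⟨y, rfl⟩; exact hb y⟩ ⟨w - β, hm⟩)
    simp only [sub_sub_cancel]
    rw [abs_of_nonneg (by rw [sub_nonneg]; exact Real.one_le_exp hβ)]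
  refine ⟨key, fun w => ?_⟩
  rw [key w, mul_div_cancel₀]
  simp
end

section
/- For all real numbers w, w̃ and β ≥ 0 with |w̃ − w| ≤ β, the softplus function satisfies the two-sided bound e^{−β} · log(1 + e^w) ≤ log(1 + e^{w̃}) ≤ e^{β} · log(1 + e^w). -/
lemma softplus_aux (a b β : ℝ) (hβ : 0 ≤ β) (h : a ≤ β + b) :
    Real.log (1 + Real.exp a) ≤ Real.exp β * Real.log (1 + Real.exp b) := by
  have hb := Real.exp_pos b
  have h1 : 1 + Real.exp β * Real.exp b ≤ (1 + Real.exp b) ^ Real.exp β :=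
    one_add_mul_self_le_rpow_one_add (by linarith) (Real.one_le_exp hβ)
  have h2 : Real.exp a ≤ Real.exp β * Real.exp b := by
    rw [← Real.exp_add]
    exact Real.exp_le_exp.mpr h
  rw [← Real.log_rpow (by linarith)]
  exact Real.log_le_log (by linarith [Real.exp_pos a]) (by linarith)

/-- Two-sided bound for the softplus function: if `|w' − w| ≤ β` with `β ≥ 0`, then
`e^{−β} log(1 + e^w) ≤ log(1 + e^{w'}) ≤ e^{β} log(1 + e^w)`. -/
theorem stmt6 (w wt β : ℝ) (hβ : 0 ≤ β) (h : |wt - w| ≤ β) :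
    Real.exp (-β) * Real.log (1 + Real.exp w) ≤ Real.log (1 + Real.exp wt) ∧
    Real.log (1 + Real.exp wt) ≤ Real.exp β * Real.log (1 + Real.exp w) := by
  obtain ⟨h1, h2⟩ := abs_le.mp h
  refine ⟨?_, softplus_aux wt w β hβ (by linarith)⟩
  have h3 := mul_le_mul_of_nonneg_left (softplus_aux w wt β hβ (by linarith))
    (Real.exp_pos (-β)).le
  rwa [← mul_assoc, ← Real.exp_add, neg_add_cancel, Real.exp_zero, one_mul] at h3
end

section
/- Let f(w) = −log(1 + e^w) for w ∈ ℝ (negative softplus). Then for every w ∈ ℝ and every β ≥ 0, |f(w)| · sup_{|w̃ − w| ≤ β} ∫₀^∞ |e^{f(w̃) t} − e^{f(w) t}| dt ≤ e^β − 1. Hence the softplus reparameterization is a stable reparameterization with modulus g(β) = e^β − 1. -/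
open Set

lemma aux_int (a b : ℝ) (ha : 0 < a) (hab : a ≤ b) :
    ∫ t in Ioi (0:ℝ), |Real.exp (-a * t) - Real.exp (-b * t)| = 1 / a - 1 / b := by
  have hb : 0 < b := ha.trans_le hab
  have h1 : ∫ t in Ioi (0:ℝ), |Real.exp (-a * t) - Real.exp (-b * t)| =
      ∫ t in Ioi (0:ℝ), (Real.exp (-a * t) - Real.exp (-b * t)) := by
    apply MeasureTheory.setIntegral_congr_fun measurableSet_Ioi
    intro t ht
    have ht' : 0 < t := ht
    apply abs_of_nonneg
    have : Real.exp (-b * t) ≤ Real.exp (-a * t) := by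
      apply Real.exp_le_exp.2
      nlinarith
    linarith
  rw [h1, MeasureTheory.integral_sub (integrableOn_exp_mul_Ioi (by linarith) 0)
    (integrableOn_exp_mul_Ioi (by linarith) 0), integral_exp_mul_Ioi (by linarith),
    integral_exp_mul_Ioi (by linarith)]
  simp

lemma aux_int_le (a b c : ℝ) (ha : 0 < a) (hb : 0 < b) (hc : 1 ≤ c)
    (h1 : a ≤ c * b) (h2 : b ≤ c * a) :
    ∫ t in Ioi (0:ℝ), |Real.exp (-b * t) - Real.exp (-a * t)| ≤ (c - 1) / a := by
  rcases le_total a b with h | h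
  · simp_rw [abs_sub_comm (Real.exp (-b * _))]
    rw [aux_int a b ha h, div_sub_div _ _ ha.ne' hb.ne', div_le_div_iff₀ (by positivity) ha]
    have : b - a ≤ (c - 1) * b := by nlinarith
    nlinarith
  · rw [aux_int b a hb h, div_sub_div _ _ hb.ne' ha.ne', div_le_div_iff₀ (by positivity) ha]
    have : a - b ≤ (c - 1) * b := by linarith
    nlinarith

lemma aux_log (β x y : ℝ) (hβ : 0 ≤ β) (h : x ≤ β + y) :
    Real.log (1 + Real.exp x) ≤ Real.exp β * Real.log (1 + Real.exp y) := by
  have hy := Real.exp_pos y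
  rw [← Real.log_rpow (by positivity)]
  apply Real.log_le_log (by positivity)
  have h1 := one_add_mul_self_le_rpow_one_add (s := Real.exp y) (by linarith)
    (Real.one_le_exp hβ)
  have h2 : Real.exp x ≤ Real.exp β * Real.exp y := by
    rw [← Real.exp_add]; exact Real.exp_le_exp.2 h
  linarith



/-- The softplus reparameterization `f(w) = −log(1 + e^w)` is stable with modulus
`g(β) = e^β − 1`: for every `w` and `β ≥ 0`,
`|f(w)| ⬝ sup_{|w' − w| ≤ β} ∫₀^∞ |e^{f(w') t} − e^{f(w) t}| dt ≤ e^β − 1`. -/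
theorem stmt7 (β : ℝ) (hβ : 0 ≤ β) (w : ℝ) :
    |(-Real.log (1 + Real.exp w))| *
      (⨆ wt : {x : ℝ // |x - w| ≤ β},
        ∫ t in Ioi (0:ℝ),
          |Real.exp (-Real.log (1 + Real.exp (wt : ℝ)) * t) -
            Real.exp (-Real.log (1 + Real.exp w) * t)|)
      ≤ Real.exp β - 1 := by
  have pos : ∀ x : ℝ, 0 < Real.log (1 + Real.exp x) := fun x =>
    Real.log_pos (by linarith [Real.exp_pos x])
  haveI : Nonempty {x : ℝ // |x - w| ≤ β} := ⟨⟨w, by simpa using hβ⟩⟩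
  rw [abs_neg, abs_of_pos (pos w), mul_comm, ← le_div_iff₀ (pos w)]
  apply ciSup_le
  rintro ⟨x, hx⟩
  have := abs_le.1 hx
  exact aux_int_le _ _ _ (pos w) (pos x) (Real.one_le_exp hβ)
    (aux_log _ _ _ hβ (by linarith)) (aux_log _ _ _ hβ (by linarith))
end

section
/- Let ρ : [0, ∞) → ℝ be Lebesgue integrable and let f : ℝ → ℝ with f(w) < 0 for all w be a stable reparameterization with modulus g. For each m let c^{(m)}, w^{(m)} ∈ ℝ^m and define the perturbation error E_m(β) := sup_{|w̃ − w^{(m)}|₂ ≤ β} ∫₀^∞ | Σ_{i=1}^m c_i^{(m)} e^{f(w̃_i) t} − ρ(t) | dt. Assume (i) the unperturbed models approximate ρ: lim_{m→∞} E_m(0) = 0, and (ii) the models are uniformly absolutely integrable: C := sup_m Σ_{i=1}^m |c_i^{(m)}| / |f(w_i^{(m)})| < ∞. Then the asymptotic perturbation error E(β) := limsup_{m→∞} E_m(β) satisfies E(β) ≤ C · g(β) for all β ≥ 0; in particular E(0) = 0 and lim_{β→0⁺} E(β) = 0, i.e. the approximation is a stable approximation. -/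
open Set Filter MeasureTheory

lemma aux_exp_int (a : ℝ) (ha : a < 0) :
    IntegrableOn (fun t : ℝ => Real.exp (a * t)) (Ioi 0) :=
  integrableOn_exp_mul_Ioi ha 0

/-- Key bound at fixed `m`. -/
lemma aux_key (ρ : ℝ → ℝ) (hρ : IntegrableOn ρ (Ioi 0))
    (f g : ℝ → ℝ) (hf : ∀ v, f v < 0) (β : ℝ) (hβ : 0 ≤ β)
    (hstab : ∀ v : ℝ,
      |f v| * (⨆ vt : {x : ℝ // |x - v| ≤ β},
        ∫ t in Ioi (0:ℝ), |Real.exp (f (vt : ℝ) * t) - Real.exp (f v * t)|) ≤ g β)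
    (m : ℕ) (c w : Fin m → ℝ) (C : ℝ) (hC : ∑ i, |c i| / |f (w i)| ≤ C) :
    (⨆ wt : {v : Fin m → ℝ // Real.sqrt (∑ i, (v i - w i) ^ 2) ≤ β},
        ∫ t in Ioi (0:ℝ), |∑ i, c i * Real.exp (f ((wt : Fin m → ℝ) i) * t) - ρ t|)
      ≤ (∫ t in Ioi (0:ℝ), |∑ i, c i * Real.exp (f (w i) * t) - ρ t|) + C * g β := by
  have hgβ : 0 ≤ g β := le_trans (mul_nonneg (abs_nonneg _)
    (Real.iSup_nonneg fun _ => integral_nonneg fun _ => abs_nonneg _)) (hstab 0)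
  have hC0 : 0 ≤ C := le_trans (Finset.sum_nonneg fun i _ => by positivity) hC
  have hN0 : 0 ≤ ∫ t in Ioi (0:ℝ), |∑ i, c i * Real.exp (f (w i) * t) - ρ t| :=
    integral_nonneg fun _ => abs_nonneg _
  have hS : ∀ v : Fin m → ℝ, IntegrableOn (fun t : ℝ => ∑ i, c i * Real.exp (f (v i) * t)) (Ioi 0) :=
    fun v => integrable_finsetSum _ fun i _ => (aux_exp_int _ (hf _)).const_mul _
  have hSρ : ∀ v : Fin m → ℝ, IntegrableOn (fun t : ℝ => |∑ i, c i * Real.exp (f (v i) * t) - ρ t|) (Ioi 0) :=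
    fun v => ((hS v).sub hρ).abs
  have hD : ∀ x y : ℝ, IntegrableOn (fun t : ℝ => |Real.exp (f x * t) - Real.exp (f y * t)|) (Ioi 0) :=
    fun x y => ((aux_exp_int _ (hf x)).sub (aux_exp_int _ (hf y))).abs
  by_cases hb : BddAbove (range fun wt : {v : Fin m → ℝ // Real.sqrt (∑ i, (v i - w i) ^ 2) ≤ β} =>
        ∫ t in Ioi (0:ℝ), |∑ i, c i * Real.exp (f ((wt : Fin m → ℝ) i) * t) - ρ t|)
  swap
  · rw [Real.iSup_of_not_bddAbove hb]; positivity
  obtain ⟨K, hK⟩ := hb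
  haveI : Nonempty {v : Fin m → ℝ // Real.sqrt (∑ i, (v i - w i) ^ 2) ≤ β} :=
    ⟨⟨w, by simpa using hβ⟩⟩
  -- single-coordinate families are bounded
  have hterm : ∀ i, ∀ x : ℝ, |x - w i| ≤ β →
      |c i| * ∫ t in Ioi (0:ℝ), |Real.exp (f x * t) - Real.exp (f (w i) * t)|
        ≤ |c i| / |f (w i)| * g β := by
    intro i x hx
    by_cases hci : c i = 0
    · simp [hci]
    have hcp : 0 < |c i| := abs_pos.mpr hci
    have hfp : 0 < |f (w i)| := abs_pos.mpr (hf _).ne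
    have hbd : BddAbove (range fun vt : {x : ℝ // |x - w i| ≤ β} =>
        ∫ t in Ioi (0:ℝ), |Real.exp (f (vt : ℝ) * t) - Real.exp (f (w i) * t)|) := by
      refine ⟨(K + ∫ t in Ioi (0:ℝ), |∑ i, c i * Real.exp (f (w i) * t) - ρ t|) / |c i|, ?_⟩
      rintro _ ⟨⟨y, hy⟩, rfl⟩
      rw [le_div_iff₀ hcp]
      have hmem : Real.sqrt (∑ j, (Function.update w i y j - w j) ^ 2) ≤ β := by
        rw [Finset.sum_eq_single i]
        · simpa [Real.sqrt_sq_eq_abs] using hy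
        · intro j _ hj; simp [Function.update_of_ne hj]
        · simp
      have h1 := hK ⟨⟨Function.update w i y, hmem⟩, rfl⟩
      simp only at h1 ⊢
      refine le_trans ?_ (add_le_add_left h1 _)
      rw [← integral_mul_const, ← integral_add (hSρ _) (hSρ _)]
      refine integral_mono ((hD _ _).mul_const _) ((hSρ _).add (hSρ _)) fun t => ?_
      have hdiff : (∑ j, c j * Real.exp (f (Function.update w i y j) * t))
          - ∑ j, c j * Real.exp (f (w j) * t) = c i * (Real.exp (f y * t) - Real.exp (f (w i) * t)) := by
        rw [← Finset.sum_sub_distrib, Finset.sum_eq_single i]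
        · simp [mul_sub]
        · intro j _ hj; simp [Function.update_of_ne hj]
        · simp
      simp only
      rw [mul_comm, ← abs_mul, ← hdiff]
      refine le_trans (le_of_eq ?_) (abs_sub _ _)
      congr 1; ring
    have h2 := le_ciSup hbd ⟨x, hx⟩
    have h3 := le_trans (mul_le_mul_of_nonneg_left h2 hfp.le) (hstab (w i))
    simp only at h3
    rw [div_mul_eq_mul_div, le_div_iff₀ hfp, mul_assoc]
    refine mul_le_mul_of_nonneg_left ?_ hcp.le
    rw [mul_comm]; exact h3
  refine ciSup_le ?_
  rintro ⟨v, hv⟩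
  simp only
  have hcoord : ∀ i, |v i - w i| ≤ β := fun i => by
    refine le_trans ?_ hv
    refine Real.abs_le_sqrt ?_
    exact Finset.single_le_sum (f := fun i => (v i - w i) ^ 2) (fun j _ => sq_nonneg _) (Finset.mem_univ i)
  have hIsum : IntegrableOn (fun t : ℝ => ∑ i, |c i| * |Real.exp (f (v i) * t) - Real.exp (f (w i) * t)|) (Ioi 0) :=
    integrable_finsetSum _ fun i _ => (hD _ _).const_mul _
  calc _ ≤ ∫ t in Ioi (0:ℝ), (|∑ i, c i * Real.exp (f (w i) * t) - ρ t|
            + ∑ i, |c i| * |Real.exp (f (v i) * t) - Real.exp (f (w i) * t)|) := by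
        refine integral_mono (hSρ _) ((hSρ _).add hIsum) fun t => ?_
        simp only
        have hh : (∑ i, c i * Real.exp (f (v i) * t) - ρ t) = (∑ i, c i * Real.exp (f (w i) * t) - ρ t)
            + ∑ i, c i * (Real.exp (f (v i) * t) - Real.exp (f (w i) * t)) := by
          simp only [mul_sub, Finset.sum_sub_distrib]; ring
        rw [hh]
        refine le_trans (abs_add_le _ _) (add_le_add_right ?_ _)
        refine le_trans (Finset.abs_sum_le_sum_abs _ _) (le_of_eq ?_)
        simp only [abs_mul]
    _ = (∫ t in Ioi (0:ℝ), |∑ i, c i * Real.exp (f (w i) * t) - ρ t|)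
          + ∑ i, |c i| * ∫ t in Ioi (0:ℝ), |Real.exp (f (v i) * t) - Real.exp (f (w i) * t)| := by
        rw [integral_add (hSρ _) hIsum, integral_finsetSum _ fun i _ => (hD _ _).const_mul _]
        simp only [integral_const_mul]
    _ ≤ (∫ t in Ioi (0:ℝ), |∑ i, c i * Real.exp (f (w i) * t) - ρ t|) + ∑ i, |c i| / |f (w i)| * g β :=
        add_le_add_right (Finset.sum_le_sum fun i _ => hterm i _ (hcoord i)) _
    _ ≤ _ := by
        rw [← Finset.sum_mul]
        exact add_le_add_right (mul_le_mul_of_nonneg_right hC hgβ) _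

/-- Stable approximation of linear functionals via stable reparameterization: if the
unperturbed linear-RNN kernels approximate the integrable memory function `ρ` in `L¹` and the
models are uniformly absolutely integrable (`Σᵢ |cᵢ|/|f(wᵢ)| ≤ C`), then the asymptotic
perturbation error satisfies `E(β) ≤ C g(β)`; in particular `E(0) = 0` and
`E(β) → 0` as `β → 0⁺`, i.e. the approximation is stable. -/
theorem stmt11 (ρ : ℝ → ℝ) (hρ : IntegrableOn ρ (Ioi 0))
    (f g : ℝ → ℝ) (hf : ∀ v, f v < 0)
    (hg : ContinuousOn g (Ici 0)) (hg0 : g 0 = 0)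
    (hstab : ∀ β ≥ (0:ℝ), ∀ v : ℝ,
      |f v| * (⨆ vt : {x : ℝ // |x - v| ≤ β},
        ∫ t in Ioi (0:ℝ), |Real.exp (f (vt : ℝ) * t) - Real.exp (f v * t)|) ≤ g β)
    (c w : (m : ℕ) → Fin m → ℝ)
    (E : ℕ → ℝ → ℝ)
    (hE : ∀ m β, E m β =
      ⨆ wt : {v : Fin m → ℝ // Real.sqrt (∑ i, (v i - w m i) ^ 2) ≤ β},
        ∫ t in Ioi (0:ℝ), |∑ i, c m i * Real.exp (f ((wt : Fin m → ℝ) i) * t) - ρ t|)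
    (happrox : Tendsto (fun m => E m 0) atTop (nhds 0))
    (C : ℝ) (hC : ∀ m, ∑ i, |c m i| / |f (w m i)| ≤ C) :
    (∀ β ≥ (0:ℝ), Filter.limsup (fun m => E m β) atTop ≤ C * g β) ∧
    Filter.limsup (fun m => E m 0) atTop = 0 ∧
    Tendsto (fun β => Filter.limsup (fun m => E m β) atTop)
      (nhdsWithin 0 (Ioi 0)) (nhds 0) := by
  have hE0 : ∀ m, E m 0 = ∫ t in Ioi (0:ℝ), |∑ i, c m i * Real.exp (f (w m i) * t) - ρ t| := by
    intro m
    rw [hE]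
    haveI : Nonempty {v : Fin m → ℝ // Real.sqrt (∑ i, (v i - w m i) ^ 2) ≤ 0} :=
      ⟨⟨w m, by simp⟩⟩
    have : ∀ wt : {v : Fin m → ℝ // Real.sqrt (∑ i, (v i - w m i) ^ 2) ≤ 0}, (wt : Fin m → ℝ) = w m := by
      rintro ⟨v, hv⟩
      funext i
      have h1 : |v i - w m i| ≤ 0 := le_trans (Real.abs_le_sqrt
        (Finset.single_le_sum (f := fun i => (v i - w m i) ^ 2) (fun j _ => sq_nonneg _) (Finset.mem_univ i))) hv
      exact sub_eq_zero.mp (abs_nonpos_iff.mp h1)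
    simp only [this, ciSup_const]
  have hle : ∀ β ≥ (0:ℝ), ∀ m, E m β ≤ E m 0 + C * g β := by
    intro β hβ m
    rw [hE0, hE]
    exact aux_key ρ hρ f g hf β hβ (hstab β hβ) m (c m) (w m) C (hC m)
  have hnn : ∀ β m, 0 ≤ E m β := fun β m => by
    rw [hE]
    exact Real.iSup_nonneg fun _ => integral_nonneg fun _ => abs_nonneg _
  have hlim : ∀ β, Tendsto (fun m => E m 0 + C * g β) atTop (nhds (C * g β)) := fun β => by
    simpa using happrox.add_const (C * g β)
  have hub : ∀ β ≥ (0:ℝ), IsBoundedUnder (· ≤ ·) atTop (fun m => E m β) := fun β hβ =>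
    (hlim β).isBoundedUnder_le.mono_le (Eventually.of_forall (hle β hβ))
  have hlb : ∀ β, IsCoboundedUnder (· ≤ ·) atTop (fun m => E m β) := fun β =>
    (isBoundedUnder_of ⟨0, hnn β⟩ : IsBoundedUnder (· ≥ ·) atTop (fun m => E m β)).isCoboundedUnder_le
  have h1 : ∀ β ≥ (0:ℝ), Filter.limsup (fun m => E m β) atTop ≤ C * g β := by
    intro β hβ
    rw [← (hlim β).limsup_eq]
    exact limsup_le_limsup (Eventually.of_forall (hle β hβ)) (hlb β) (hlim β).isBoundedUnder_le
  refine ⟨h1, happrox.limsup_eq, ?_⟩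
  have hgt : Tendsto (fun β => C * g β) (nhdsWithin 0 (Ioi 0)) (nhds 0) := by
    have h2 : Tendsto g (nhdsWithin 0 (Ioi 0)) (nhds 0) := by
      have := (hg 0 (mem_Ici.mpr le_rfl)).mono Ioi_subset_Ici_self
      rw [ContinuousWithinAt, hg0] at this
      exact this
    simpa using h2.const_mul C
  refine tendsto_of_tendsto_of_tendsto_of_le_of_le' tendsto_const_nhds hgt ?_ ?_
  · filter_upwards [self_mem_nhdsWithin] with β hβ
    exact le_limsup_of_frequently_le (Frequently.of_forall (hnn β)) (hub β (le_of_lt hβ))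
  · filter_upwards [self_mem_nhdsWithin] with β hβ
    exact h1 β (le_of_lt hβ)
end

section
/- (Continuous-time gradient bound.) Let ρ : [0, ∞) → ℝ be Lebesgue integrable, let m ≥ 1, c ∈ ℝ^m, and let f : ℝ → ℝ be differentiable with f(v) > 0 for all v. Define Loss(w) := ∫₀^∞ | ρ(s) − Σ_{i=1}^m c_i e^{−f(w_i) s} | ds for w ∈ ℝ^m. Fix j and a point w at which the partial derivative ∂Loss/∂w_j exists. Then |∂Loss/∂w_j (w)| ≤ |c_j| · |f'(w_j)| / f(w_j)². -/
open Set MeasureTheory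

theorem aux_le_s12 (a b : ℝ) (ha : 0 < a) (hb : 0 < b) (h : a ≤ b) :
    ∫ s in Ioi (0:ℝ), |Real.exp (-a * s) - Real.exp (-b * s)| = |a⁻¹ - b⁻¹| := by
  have ia := integrableOn_exp_mul_Ioi (neg_lt_zero.mpr ha) 0
  have ib := integrableOn_exp_mul_Ioi (neg_lt_zero.mpr hb) 0
  have h1 : ∫ s in Ioi (0:ℝ), |Real.exp (-a * s) - Real.exp (-b * s)|
      = ∫ s in Ioi (0:ℝ), (Real.exp (-a * s) - Real.exp (-b * s)) := by
    apply setIntegral_congr_fun measurableSet_Ioi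
    intro s hs
    have hs' : (0:ℝ) < s := hs
    apply abs_of_nonneg
    rw [sub_nonneg]
    apply Real.exp_le_exp.mpr
    nlinarith
  rw [h1, integral_sub ia ib, integral_exp_mul_Ioi (neg_lt_zero.mpr ha),
    integral_exp_mul_Ioi (neg_lt_zero.mpr hb)]
  rw [abs_of_nonneg (sub_nonneg.mpr (inv_anti₀ ha h))]
  simp [neg_div_neg_eq]

theorem aux_eq (a b : ℝ) (ha : 0 < a) (hb : 0 < b) :
    ∫ s in Ioi (0:ℝ), |Real.exp (-a * s) - Real.exp (-b * s)| = |a⁻¹ - b⁻¹| := by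
  rcases le_total a b with h | h
  · exact aux_le_s12 a b ha hb h
  · rw [abs_sub_comm, ← aux_le_s12 b a hb ha h]
    simp_rw [abs_sub_comm]

/-- Continuous-time gradient bound: for the `L¹` loss
`Loss(w) = ∫₀^∞ |ρ(s) − Σᵢ cᵢ e^{−f(wᵢ) s}| ds` with reparameterized decay rates `f > 0`, any
partial derivative with respect to `w_j` is bounded by `|c_j| |f'(w_j)| / f(w_j)²`. -/
theorem stmt12 (ρ : ℝ → ℝ) (hρ : IntegrableOn ρ (Ioi 0))
    (m : ℕ) (hm : 1 ≤ m) (c : Fin m → ℝ)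
    (f f' : ℝ → ℝ) (hf : ∀ v, 0 < f v) (hf' : ∀ v, HasDerivAt f (f' v) v)
    (w : Fin m → ℝ) (j : Fin m) (D : ℝ)
    (hD : HasDerivAt
      (fun x : ℝ =>
        ∫ s in Ioi (0:ℝ),
          |ρ s - ∑ i, c i * Real.exp (-(f ((Function.update w j x) i)) * s)|)
      D (w j)) :
    |D| ≤ |c j| * |f' (w j)| / (f (w j)) ^ 2 := by
  have key : ∀ x y : ℝ,
      |(∫ s in Ioi (0:ℝ), |ρ s - ∑ i, c i * Real.exp (-(f ((Function.update w j x) i)) * s)|)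
        - (∫ s in Ioi (0:ℝ), |ρ s - ∑ i, c i * Real.exp (-(f ((Function.update w j y) i)) * s)|)|
      ≤ |c j| * |(f x)⁻¹ - (f y)⁻¹| := by
    intro x y
    have hint : ∀ z : ℝ, IntegrableOn
        (fun s => ρ s - ∑ i, c i * Real.exp (-(f ((Function.update w j z) i)) * s)) (Ioi 0) := by
      intro z
      refine Integrable.sub hρ (integrable_finsetSum _ fun i _ => ?_)
      exact (integrableOn_exp_mul_Ioi (neg_lt_zero.mpr (hf _)) 0).const_mul _
    have hsum : ∀ z s : ℝ, ∑ i, c i * Real.exp (-(f ((Function.update w j z) i)) * s)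
        = c j * Real.exp (-(f z) * s)
          + ∑ i ∈ Finset.univ.erase j, c i * Real.exp (-(f (w i)) * s) := by
      intro z s
      rw [← Finset.add_sum_erase _ _ (Finset.mem_univ j)]
      congr 1
      · simp
      · apply Finset.sum_congr rfl
        intro i hi
        rw [Function.update_of_ne (Finset.ne_of_mem_erase hi)]
    rw [← integral_sub (hint x).abs (hint y).abs, ← aux_eq _ _ (hf x) (hf y),
      ← integral_const_mul]
    refine (abs_integral_le_integral_abs).trans ?_
    apply integral_mono
    · exact ((hint x).abs.sub (hint y).abs).abs
    · exact (((integrableOn_exp_mul_Ioi (neg_lt_zero.mpr (hf x)) 0).sub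
        (integrableOn_exp_mul_Ioi (neg_lt_zero.mpr (hf y)) 0)).abs).const_mul _
    · intro s
      refine (abs_abs_sub_abs_le _ _).trans (le_of_eq ?_)
      beta_reduce
      rw [hsum x s, hsum y s, ← abs_mul, ← abs_neg]
      congr 1
      ring
  have hg : HasDerivAt (fun x => (f x)⁻¹) (-(f' (w j)) / (f (w j)) ^ 2) (w j) :=
    (hf' (w j)).fun_inv (hf _).ne'
  have t1 := (hasDerivAt_iff_tendsto_slope.mp hD).abs
  have t2 := ((hasDerivAt_iff_tendsto_slope.mp hg).abs).const_mul |c j|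
  have := le_of_tendsto_of_tendsto' t1 t2 (fun x => by
    simp only [slope_def_field, abs_div]
    rw [← mul_div_assoc]
    exact div_le_div_of_nonneg_right (key x (w j)) (abs_nonneg _))
  refine this.trans (le_of_eq ?_)
  rw [abs_div, abs_neg, abs_of_nonneg (sq_nonneg (f (w j))), mul_div_assoc]
end

section
/- (Discrete-time gradient bound.) Let (ρ_k)_{k≥0} be an absolutely summable real sequence, let m ≥ 1, c ∈ ℝ^m, and let f : ℝ → ℝ be differentiable with 0 ≤ f(v) < 1 for all v. Define Loss(w) := Σ_{k=0}^∞ | ρ_k − Σ_{i=1}^m c_i f(w_i)^k | for w ∈ ℝ^m. Fix j and a point w at which the partial derivative ∂Loss/∂w_j exists. Then |∂Loss/∂w_j (w)| ≤ |c_j| · |f'(w_j)| / (1 − f(w_j))². -/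
theorem geom_abs_aux (a b : ℝ) (ha : 0 ≤ a) (ha1 : a < 1) (hb : 0 ≤ b) (hb1 : b < 1) :
    HasSum (fun k : ℕ => |a ^ k - b ^ k|) |(1 - a)⁻¹ - (1 - b)⁻¹| := by
  have key : ∀ a b : ℝ, 0 ≤ a → a < 1 → 0 ≤ b → b < 1 → b ≤ a →
      HasSum (fun k : ℕ => |a ^ k - b ^ k|) |(1 - a)⁻¹ - (1 - b)⁻¹| := by
    intro a b ha ha1 hb hb1 h
    have h1 := (hasSum_geometric_of_lt_one ha ha1).sub (hasSum_geometric_of_lt_one hb hb1)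
    have h2 : ∀ k : ℕ, 0 ≤ a ^ k - b ^ k := fun k => sub_nonneg.2 (pow_le_pow_left₀ hb h k)
    rw [abs_of_nonneg (h1.nonneg h2)]
    simpa only [abs_of_nonneg (h2 _)] using h1
  rcases le_total b a with h | h
  · exact key a b ha ha1 hb hb1 h
  · have := key b a hb hb1 ha ha1 h
    rw [abs_sub_comm]
    simpa only [abs_sub_comm] using this

/-- Discrete-time gradient bound: for the `ℓ¹` loss
`Loss(w) = Σ_{k≥0} |ρ_k − Σᵢ cᵢ f(wᵢ)^k|` with reparameterized weights `0 ≤ f < 1`, any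
partial derivative with respect to `w_j` is bounded by `|c_j| |f'(w_j)| / (1 − f(w_j))²`. -/
theorem stmt13 (ρ : ℕ → ℝ) (hρ : Summable (fun k => |ρ k|))
    (m : ℕ) (hm : 1 ≤ m) (c : Fin m → ℝ)
    (f f' : ℝ → ℝ) (hf0 : ∀ v, 0 ≤ f v) (hf1 : ∀ v, f v < 1)
    (hf' : ∀ v, HasDerivAt f (f' v) v)
    (w : Fin m → ℝ) (j : Fin m) (D : ℝ)
    (hD : HasDerivAt
      (fun x : ℝ =>
        ∑' k : ℕ, |ρ k - ∑ i, c i * (f ((Function.update w j x) i)) ^ k|)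
      D (w j)) :
    |D| ≤ |c j| * |f' (w j)| / (1 - f (w j)) ^ 2 := by
  set L : ℝ → ℝ := fun x : ℝ =>
        ∑' k : ℕ, |ρ k - ∑ i, c i * (f ((Function.update w j x) i)) ^ k| with hL
  have hS : ∀ x, Summable (fun k : ℕ =>
      |ρ k - ∑ i, c i * (f ((Function.update w j x) i)) ^ k|) := by
    intro x
    have h1 : Summable (fun k : ℕ => ∑ i, c i * (f ((Function.update w j x) i)) ^ k) :=
      summable_sum fun i _ =>
        (summable_geometric_of_lt_one (hf0 _) (hf1 _)).mul_left (c i)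
    exact (hρ.of_abs.sub h1).abs
  have hdiff : ∀ x y (k : ℕ),
      (ρ k - ∑ i, c i * (f ((Function.update w j x) i)) ^ k)
        - (ρ k - ∑ i, c i * (f ((Function.update w j y) i)) ^ k)
      = - (c j * (f x ^ k - f y ^ k)) := by
    intro x y k
    have : ∑ i, c i * (f ((Function.update w j x) i)) ^ k
        - ∑ i, c i * (f ((Function.update w j y) i)) ^ k = c j * (f x ^ k - f y ^ k) := by
      rw [← Finset.sum_sub_distrib, Finset.sum_eq_single j]
      · simp; ring
      · intro i _ hi
        simp [Function.update_of_ne hi]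
      · simp
    linarith
  have hle : ∀ x y, L x - L y ≤ |c j| * |(1 - f x)⁻¹ - (1 - f y)⁻¹| := by
    intro x y
    have h1 := (hS x).hasSum.sub (hS y).hasSum
    have h2 := (geom_abs_aux (f x) (f y) (hf0 _) (hf1 _) (hf0 _) (hf1 _)).mul_left |c j|
    refine hasSum_le (fun k => ?_) h1 h2
    refine (abs_sub_abs_le_abs_sub _ _).trans ?_
    rw [hdiff, abs_neg, abs_mul]
  have habs : ∀ x y, |L x - L y| ≤ |c j| * |(1 - f x)⁻¹ - (1 - f y)⁻¹| := by
    intro x y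
    refine abs_le.2 ⟨?_, hle x y⟩
    have := hle y x
    rw [abs_sub_comm] at this
    linarith
  have hne : 1 - f (w j) ≠ 0 := by linarith [hf1 (w j)]
  have hg : HasDerivAt (fun x => (1 - f x)⁻¹) (f' (w j) / (1 - f (w j)) ^ 2) (w j) := by
    have := ((hf' (w j)).const_sub 1).fun_inv hne
    simpa using this
  have t1 := (hasDerivAt_iff_tendsto_slope.1 hD).abs
  have t2 := ((hasDerivAt_iff_tendsto_slope.1 hg).abs).const_mul |c j|
  have := le_of_tendsto_of_tendsto' t1 t2 (fun x => by
    rw [slope_def_field, slope_def_field, abs_div, abs_div, ← mul_div_assoc]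
    exact div_le_div_of_nonneg_right (habs x (w j)) (abs_nonneg _))
  rwa [abs_div, abs_of_nonneg (sq_nonneg (1 - f (w j))), ← mul_div_assoc] at this
end

section
/- (Characterization of the 'best' reparameterization.) Let a > 0 and let f : ℝ → ℝ be differentiable with f(w) < 0 for all w, satisfying the ODE f'(w) = a · w · f(w)² for all w ∈ ℝ (equivalently, f'(w)/f(w)² = a w, i.e. the gradient-over-weight ratio G_f(w)/|w| is constant). Then, with b := −1/f(0) > 0, f is given by f(w) = −1 / ( (a/2) w² + b ) for all w ∈ ℝ. -/
/-- Characterization of the "best" reparameterization: if `f < 0` is differentiable and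
satisfies `f'(w) = a w f(w)²` for all `w` (constant gradient-over-weight ratio), then with
`b := −1/f(0) > 0` one has `f(w) = −1/((a/2) w² + b)` for all `w`. -/
theorem stmt16 (a : ℝ) (ha : 0 < a) (f : ℝ → ℝ)
    (hneg : ∀ w, f w < 0)
    (hODE : ∀ w, HasDerivAt f (a * w * (f w) ^ 2) w) :
    0 < -(1 / f 0) ∧ ∀ w, f w = -1 / (a / 2 * w ^ 2 + -(1 / f 0)) := by
  have hb : 0 < -(1 / f 0) := by
    have := one_div_neg.mpr (hneg 0)
    linarith
  refine ⟨hb, fun w => ?_⟩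
  have hD : ∀ x, HasDerivAt (fun x => (f x)⁻¹ + a / 2 * x ^ 2) 0 x := by
    intro x
    have hx : f x ≠ 0 := (hneg x).ne
    have h1 := (hODE x).fun_inv hx
    have h2 := ((hasDerivAt_id x).fun_pow 2).const_mul (a / 2)
    have h3 := h1.fun_add h2
    refine h3.congr_deriv ?_
    simp only [id]
    field_simp
    norm_num
    right
    ring
  have hc := is_const_of_deriv_eq_zero (fun x => (hD x).differentiableAt)
    (fun x => (hD x).deriv) w 0
  have hw : f w ≠ 0 := (hneg w).ne
  have key : a / 2 * w ^ 2 + -(1 / f 0) = -(f w)⁻¹ := by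
    rw [one_div]
    norm_num at hc
    linarith
  rw [key]
  field_simp
end

section
/- (Pointwise continuity of model outputs.) In the setting of the Grönwall dependence estimate, let Λ ∈ ℝ^{m×m}, U ∈ ℝ^{m×d}, b, c ∈ ℝ^m, let σ : ℝ^m → ℝ^m be L-Lipschitz with respect to |·|_∞, and let x, x_k : [0, ∞) → ℝ^d (k ∈ ℕ) be continuous and uniformly bounded with lim_{k→∞} sup_{t} |x_k(t) − x(t)|_∞ = 0. Let h, h_k solve h'(t) = σ(Λ h(t) + U x(t) + b) and h_k'(t) = σ(Λ h_k(t) + U x_k(t) + b) with h(0) = h_k(0) = 0, and define outputs y(t) = cᵀ h(t), y_k(t) = cᵀ h_k(t). Then for every t ≥ 0, lim_{k→∞} |h_k(t) − h(t)|_∞ = 0 and lim_{k→∞} | y_k'(t) − y'(t) | = 0. -/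
open Filter

/-- Pointwise continuity of model outputs: if the inputs `x_k` converge to `x` uniformly and
are uniformly bounded, then the hidden states `h_k(t)` converge to `h(t)` and the derivatives
of the scalar outputs `y_k(t) = cᵀ h_k(t)` converge to that of `y(t) = cᵀ h(t)`, for every
`t ≥ 0`. -/
theorem stmt18 (m d : ℕ)
    (Λ : Matrix (Fin m) (Fin m) ℝ) (U : Matrix (Fin m) (Fin d) ℝ)
    (b c : Fin m → ℝ) (L : NNReal)
    (σ : (Fin m → ℝ) → Fin m → ℝ) (hσ : LipschitzWith L σ)
    (x : ℝ → Fin d → ℝ) (xk : ℕ → ℝ → Fin d → ℝ)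
    (hx : Continuous x) (hxk : ∀ k, Continuous (xk k))
    (hbdd : ∃ M, (∀ t, ‖x t‖ ≤ M) ∧ ∀ k t, ‖xk k t‖ ≤ M)
    (hconv : ∀ ε > (0:ℝ), ∃ K : ℕ, ∀ k ≥ K, ∀ t : ℝ, ‖xk k t - x t‖ ≤ ε)
    (h : ℝ → Fin m → ℝ) (hk : ℕ → ℝ → Fin m → ℝ)
    (hode : ∀ t, HasDerivAt h (σ (Λ.mulVec (h t) + U.mulVec (x t) + b)) t)
    (hodek : ∀ k t, HasDerivAt (hk k) (σ (Λ.mulVec (hk k t) + U.mulVec (xk k t) + b)) t)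
    (hinit : h 0 = 0) (hinitk : ∀ k, hk k 0 = 0)
    (y : ℝ → ℝ) (yk : ℕ → ℝ → ℝ)
    (hy : ∀ t, y t = ∑ i, c i * h t i) (hyk : ∀ k t, yk k t = ∑ i, c i * hk k t i)
    (y' : ℝ → ℝ) (yk' : ℕ → ℝ → ℝ)
    (hy' : ∀ t, HasDerivAt y (y' t) t) (hyk' : ∀ k t, HasDerivAt (yk k) (yk' k t) t) :
    ∀ t ≥ (0:ℝ),
      Tendsto (fun k => ‖hk k t - h t‖) atTop (nhds 0) ∧
      Tendsto (fun k => |yk' k t - y' t|) atTop (nhds 0) := by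
  obtain ⟨A, hA⟩ : ∃ A : (Fin m → ℝ) →L[ℝ] (Fin m → ℝ), ∀ v, A v = Λ.mulVec v :=
    ⟨LinearMap.toContinuousLinearMap Λ.mulVecLin, fun v => by simp⟩
  obtain ⟨B, hB⟩ : ∃ B : (Fin d → ℝ) →L[ℝ] (Fin m → ℝ), ∀ v, B v = U.mulVec v :=
    ⟨LinearMap.toContinuousLinearMap U.mulVecLin, fun v => by simp⟩
  simp only [← hA, ← hB] at hode hodek
  intro t ht
  have hxt : Tendsto (fun k => xk k t) atTop (nhds (x t)) := by
    rw [Metric.tendsto_atTop]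
    intro ε hε
    obtain ⟨K, hK⟩ := hconv (ε / 2) (by positivity)
    refine ⟨K, fun k hkK => ?_⟩
    rw [dist_eq_norm]
    have := hK k hkK t
    linarith
  have hht : Tendsto (fun k => ‖hk k t - h t‖) atTop (nhds 0) := by
    have hcont : Continuous
        (fun ε : ℝ => gronwallBound 0 (L * ‖A‖) (L * (‖B‖ * ε)) (t - 0)) :=
      (gronwallBound_continuous_ε 0 (L * ‖A‖) (t - 0)).comp
        (by fun_prop : Continuous fun ε : ℝ => (L : ℝ) * (‖B‖ * ε))
    have h0 := hcont.tendsto 0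
    simp only [mul_zero, gronwallBound_ε0_δ0] at h0
    rw [Metric.tendsto_atTop]
    intro η hη
    have h1 := (h0.mono_left (nhdsWithin_le_nhds (s := Set.Ioi (0 : ℝ)))).eventually
      (gt_mem_nhds hη)
    obtain ⟨ε, hεη, hε⟩ := (h1.and self_mem_nhdsWithin).exists
    obtain ⟨K, hK⟩ := hconv ε hε
    refine ⟨K, fun k hkK => ?_⟩
    have key := norm_le_gronwallBound_of_norm_deriv_right_le
      (f := fun s => hk k s - h s)
      (f' := fun s => σ (A (hk k s) + B (xk k s) + b) - σ (A (h s) + B (x s) + b))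
      (δ := 0) (K := L * ‖A‖) (ε := L * (‖B‖ * ε)) (a := 0) (b := t)
      (fun s _ => ((hodek k s).sub (hode s)).continuousAt.continuousWithinAt)
      (fun s _ => ((hodek k s).sub (hode s)).hasDerivWithinAt)
      (by simp [hinit, hinitk])
      (by
        intro s _
        have e : (A (hk k s) + B (xk k s) + b) - (A (h s) + B (x s) + b)
            = A (hk k s - h s) + B (xk k s - x s) := by
          rw [map_sub, map_sub]; abel
        calc ‖σ (A (hk k s) + B (xk k s) + b) - σ (A (h s) + B (x s) + b)‖
            ≤ L * ‖(A (hk k s) + B (xk k s) + b) - (A (h s) + B (x s) + b)‖ :=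
              hσ.norm_sub_le _ _
          _ = L * ‖A (hk k s - h s) + B (xk k s - x s)‖ := by rw [e]
          _ ≤ L * (‖A‖ * ‖hk k s - h s‖ + ‖B‖ * ε) := by
              gcongr
              refine (norm_add_le _ _).trans ?_
              gcongr
              · exact A.le_opNorm _
              · exact (B.le_opNorm _).trans (by gcongr; exact hK k hkK s)
          _ = L * ‖A‖ * ‖hk k s - h s‖ + L * (‖B‖ * ε) := by ring)
      t ⟨ht, le_rfl⟩
    rw [dist_zero_right, norm_norm]
    exact lt_of_le_of_lt key hεη
  refine ⟨hht, ?_⟩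
  have hht' : Tendsto (fun k => hk k t) atTop (nhds (h t)) :=
    tendsto_iff_norm_sub_tendsto_zero.mpr hht
  have hz : Tendsto (fun k => σ (A (hk k t) + B (xk k t) + b)) atTop
      (nhds (σ (A (h t) + B (x t) + b))) :=
    (hσ.continuous.tendsto _).comp
      ((((A.continuous.tendsto _).comp hht').add ((B.continuous.tendsto _).comp hxt)).add_const b)
  have dy : y' t = ∑ i, c i * σ (A (h t) + B (x t) + b) i := by
    refine (hy' t).unique ?_
    rw [show y = fun t => ∑ i, c i * h t i from funext hy]
    exact HasDerivAt.fun_sum fun i _ => ((hasDerivAt_pi.mp (hode t)) i).const_mul (c i)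
  have dyk : ∀ k, yk' k t = ∑ i, c i * σ (A (hk k t) + B (xk k t) + b) i := by
    intro k
    refine (hyk' k t).unique ?_
    rw [show yk k = fun t => ∑ i, c i * hk k t i from funext (hyk k)]
    exact HasDerivAt.fun_sum fun i _ => ((hasDerivAt_pi.mp (hodek k t)) i).const_mul (c i)
  have hfin : Tendsto (fun k => yk' k t) atTop (nhds (y' t)) := by
    simp only [dy, dyk]
    exact tendsto_finsetSum _ fun i _ => ((tendsto_pi_nhds.mp hz) i).const_mul (c i)
  exact tendsto_iff_norm_sub_tendsto_zero.mp hfin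
end

section
/- (Exponential memory decay of a diagonal SSM.) Let β₀ > 0, let Λ ∈ ℝ^{m×m} be diagonal with every diagonal entry λ_i ≤ −β₀, let U ∈ ℝ^{m×d}, b, c ∈ ℝ^m, and let σ : ℝ → ℝ be differentiable with |σ'(z)| ≤ L₀ for all z, applied coordinatewise. For a constant (Heaviside) input x₀ ∈ ℝ^d, let h : [0, ∞) → ℝ^m solve h'(t) = Λ h(t) + U x₀ + b with h(0) = 0, and set y(t) = cᵀ σ(h(t)). Then for all t ≥ 0, |y'(t)| ≤ |c|₂ · L₀ · |U x₀ + b|₂ · e^{−β₀ t}. -/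
/-- Exponential memory decay of a diagonal SSM: if every diagonal entry of `Λ` is `≤ −β₀`,
the hidden state solves `h' = Λ h + U x₀ + b`, `h(0) = 0` (Heaviside input `x₀`), the scalar
activation `σ` has `|σ'| ≤ L₀`, and `y(t) = cᵀ σ(h(t))`, then
`|y'(t)| ≤ |c|₂ L₀ |U x₀ + b|₂ e^{−β₀ t}` for all `t ≥ 0`. -/
theorem stmt19 (m d : ℕ) (β₀ : ℝ) (hβ₀ : 0 < β₀)
    (lam : Fin m → ℝ) (hlam : ∀ i, lam i ≤ -β₀)
    (U : Matrix (Fin m) (Fin d) ℝ) (b c : Fin m → ℝ)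
    (σ σ' : ℝ → ℝ) (L₀ : ℝ)
    (hσ : ∀ z, HasDerivAt σ (σ' z) z) (hσ' : ∀ z, |σ' z| ≤ L₀)
    (x₀ : Fin d → ℝ) (h : ℝ → Fin m → ℝ)
    (hode : ∀ t, HasDerivAt h ((Matrix.diagonal lam).mulVec (h t) + U.mulVec x₀ + b) t)
    (hinit : h 0 = 0)
    (y' : ℝ → ℝ)
    (hy' : ∀ t, HasDerivAt (fun s => ∑ i, c i * σ (h s i)) (y' t) t) :
    ∀ t ≥ (0:ℝ), |y' t| ≤
      Real.sqrt (∑ i, c i ^ 2) * L₀ * Real.sqrt (∑ i, ((U.mulVec x₀ + b) i) ^ 2) *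
        Real.exp (-β₀ * t) := by
  intro t ht
  have hL : 0 ≤ L₀ := (abs_nonneg _).trans (hσ' 0)
  set k : Fin m → ℝ := U.mulVec x₀ + b with hk
  have hcomp : ∀ i s, HasDerivAt (fun r => h r i) (lam i * h s i + k i) s := by
    intro i s
    have h1 := (hasDerivAt_pi.1 (hode s)) i
    have h2 : ((Matrix.diagonal lam).mulVec (h s) + U.mulVec x₀ + b) i
        = lam i * h s i + k i := by
      simp only [hk, Pi.add_apply, Matrix.mulVec_diagonal]
      ring
    rw [h2] at h1
    exact h1
  have hv : ∀ i, lam i * h t i + k i = k i * Real.exp (lam i * t) := by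
    intro i
    have hg : ∀ s, HasDerivAt
        (fun r => (lam i * h r i + k i) * Real.exp (-(lam i * r))) 0 s := by
      intro s
      have h1 : HasDerivAt (fun r => lam i * h r i + k i)
          (lam i * (lam i * h s i + k i)) s :=
        ((hcomp i s).const_mul (lam i)).add_const (k i)
      have h2 : HasDerivAt (fun r => Real.exp (-(lam i * r)))
          (Real.exp (-(lam i * s)) * (-(lam i * 1))) s :=
        (((hasDerivAt_id s).const_mul (lam i)).neg).exp
      have h3 := h1.mul h2
      refine h3.congr_deriv ?_
      ring
    have hc := is_const_of_deriv_eq_zero (fun s => (hg s).differentiableAt)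
      (fun s => (hg s).deriv) t 0
    simp only [hinit, Pi.zero_apply, mul_zero, zero_add, neg_zero, Real.exp_zero, mul_one] at hc
    have he : Real.exp (-(lam i * t)) * Real.exp (lam i * t) = 1 := by
      rw [← Real.exp_add]
      simp
    calc lam i * h t i + k i
        = (lam i * h t i + k i) * (Real.exp (-(lam i * t)) * Real.exp (lam i * t)) := by
          rw [he, mul_one]
      _ = ((lam i * h t i + k i) * Real.exp (-(lam i * t))) * Real.exp (lam i * t) := by ring
      _ = k i * Real.exp (lam i * t) := congrArg (· * Real.exp (lam i * t)) hc
  have hy : y' t = ∑ i, c i * (σ' (h t i) * (k i * Real.exp (lam i * t))) := by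
    refine (hy' t).unique ?_
    refine HasDerivAt.fun_sum fun i _ => ?_
    rw [← hv i]
    exact ((hσ (h t i)).comp t (hcomp i t)).const_mul (c i)
  have hterm : ∀ i, |c i * (σ' (h t i) * (k i * Real.exp (lam i * t)))|
      ≤ L₀ * Real.exp (-β₀ * t) * (|c i| * |k i|) := by
    intro i
    rw [abs_mul, abs_mul, abs_mul, Real.abs_exp]
    have he : Real.exp (lam i * t) ≤ Real.exp (-β₀ * t) :=
      Real.exp_le_exp.2 (mul_le_mul_of_nonneg_right (hlam i) ht)
    calc |c i| * (|σ' (h t i)| * (|k i| * Real.exp (lam i * t)))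
        ≤ |c i| * (L₀ * (|k i| * Real.exp (-β₀ * t))) := by
          gcongr
          exact hσ' _
      _ = _ := by ring
  have hcs : ∑ i, |c i| * |k i| ≤ Real.sqrt (∑ i, c i ^ 2) * Real.sqrt (∑ i, k i ^ 2) := by
    have := Real.sum_mul_le_sqrt_mul_sqrt Finset.univ (fun i => |c i|) (fun i => |k i|)
    simpa only [sq_abs] using this
  calc |y' t| ≤ ∑ i, |c i * (σ' (h t i) * (k i * Real.exp (lam i * t)))| := by
        rw [hy]
        exact Finset.abs_sum_le_sum_abs _ _
    _ ≤ ∑ i, L₀ * Real.exp (-β₀ * t) * (|c i| * |k i|) :=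
        Finset.sum_le_sum fun i _ => hterm i
    _ = L₀ * Real.exp (-β₀ * t) * ∑ i, |c i| * |k i| := by rw [Finset.mul_sum]
    _ ≤ L₀ * Real.exp (-β₀ * t) * (Real.sqrt (∑ i, c i ^ 2) * Real.sqrt (∑ i, k i ^ 2)) := by
        gcongr
    _ = _ := by ring
end
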